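/- arXiv:2005.13223 — 2 statements merged into one kernel-verified Lean document; each statement's English description precedes it below -/
import Mathlib

section
/- Let q be a real number with 0 < q and q ≠ 1, let h₁, h₂, α₁, λ be real numbers and t₁, t₂ nonzero reals, and let (i,i') = (1,2) or (i,i') = (2,1). Assume λ + α₁ = -N for some positive integer N (so (q^{λ+α₁};q)_n = 0 for all n > N and the series below is a finite sum). Then the function g(x) = x^{-α₁} · Σ_{n=0}^{N} (q^{h_i+1/2}t_i/x;q)_n · (q^{λ+α₁};q)_n · q^n · Σ_{k=0}^{n} q^{k²} · (q^{λ+α₁+h_i-h_{i'}}·t_i/t_{i'})^k / ((q;q)_k (q;q)_{n-k}) satisfies the variant of the confluent q-hypergeometric equation of type (0,2) for all x > 0. -/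
/-- The finite q-shifted factorial `(a;q)_n = ∏_{i=0}^{n-1} (1 - a q^i)`. -/
noncomputable def qPoch (q a : ℝ) (n : ℕ) : ℝ :=
  ∏ i ∈ Finset.range n, (1 - a * q ^ i)

/-- The variant of the confluent q-hypergeometric equation of type (0,2) (for `x > 0`). -/
def confEq02 (q h₁ h₂ α₁ lam t₁ t₂ : ℝ) (g : ℝ → ℝ) : Prop :=
  ∀ x : ℝ, 0 < x →
    g (q * x)
    + q ^ (2 * lam + 1) * (1 - q ^ (-h₁ - 1/2) * t₁⁻¹ * x) * (1 - q ^ (-h₂ - 1/2) * t₂⁻¹ * x)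
        * g (x / q)
    - (q ^ (α₁ + 2 * lam - h₁ - h₂) * t₁⁻¹ * t₂⁻¹ * x ^ 2
        - q ^ (lam + 1/2) * (q ^ (-h₁) * t₁⁻¹ + q ^ (-h₂) * t₂⁻¹) * x
        + q ^ lam * (q + 1)) * g x = 0

lemma qPoch_succ (q a : ℝ) (n : ℕ) : qPoch q a (n+1) = qPoch q a n * (1 - a * q ^ n) := by
  simp [qPoch, Finset.prod_range_succ]

lemma qPoch_zero (q a : ℝ) : qPoch q a 0 = 1 := by simp [qPoch]

lemma qPoch_shift (q a : ℝ) (n : ℕ) :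
    qPoch q a (n+1) = (1 - a) * qPoch q (q * a) n := by
  simp only [qPoch, Finset.prod_range_succ']
  rw [mul_comm]
  congr 1
  · simp
  · apply Finset.prod_congr rfl
    intros; ring

lemma qPoch_ne (q : ℝ) (hq : 0 < q) (hq1 : q ≠ 1) (n : ℕ) : qPoch q q n ≠ 0 := by
  rw [qPoch, Finset.prod_ne_zero_iff]
  intro i _ h
  have : q ^ (i+1) = 1 := by rw [pow_succ]; linarith
  exact hq1 ((pow_eq_one_iff_of_nonneg hq.le (by omega)).1 this)

noncomputable def Ssum (q w : ℝ) (n : ℕ) : ℝ :=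
  ∑ k ∈ Finset.range (n + 1), q ^ (k ^ 2) * w ^ k / (qPoch q q k * qPoch q q (n - k))

noncomputable def Eser (q w : ℝ) : PowerSeries ℝ :=
  PowerSeries.mk fun k => q ^ (k ^ 2) * w ^ k / qPoch q q k

noncomputable def eser (q : ℝ) : PowerSeries ℝ :=
  PowerSeries.mk fun k => 1 / qPoch q q k

lemma coeff_Ee (q w : ℝ) (n : ℕ) : PowerSeries.coeff n (Eser q w * eser q) = Ssum q w n := by
  rw [PowerSeries.coeff_mul, Finset.Nat.sum_antidiagonal_eq_sum_range_succ_mk, Ssum]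
  apply Finset.sum_congr rfl
  intro k _
  simp [Eser, eser]
  ring

lemma one_sub_ne (q : ℝ) (hq : 0 < q) (hq1 : q ≠ 1) (n : ℕ) : 1 - q * q ^ n ≠ 0 := by
  have h := qPoch_ne q hq hq1 (n+1)
  rw [qPoch_succ] at h
  exact right_ne_zero_of_mul h

lemma Eser_eq (q w : ℝ) (hq : 0 < q) (hq1 : q ≠ 1) :
    Eser q w - PowerSeries.rescale q (Eser q w) =
      PowerSeries.X * (PowerSeries.C (q * w) * PowerSeries.rescale (q ^ 2) (Eser q w)) := by
  ext n
  cases n with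
  | zero =>
    rw [PowerSeries.coeff_zero_X_mul, map_sub, PowerSeries.coeff_rescale]
    simp
  | succ n =>
    rw [PowerSeries.coeff_succ_X_mul]
    simp only [map_sub, PowerSeries.coeff_C_mul, PowerSeries.coeff_rescale, Eser,
      PowerSeries.coeff_mk, qPoch_succ]
    have h1 := qPoch_ne q hq hq1 n
    have h2 := one_sub_ne q hq hq1 n
    field_simp
    ring

lemma eser_eq (q : ℝ) (hq : 0 < q) (hq1 : q ≠ 1) :
    PowerSeries.rescale q (eser q) = eser q - PowerSeries.X * eser q := by
  ext n
  cases n with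
  | zero => simp [eser]
  | succ n =>
    rw [map_sub, PowerSeries.coeff_succ_X_mul]
    simp only [PowerSeries.coeff_rescale, eser, PowerSeries.coeff_mk, qPoch_succ]
    have h1 := qPoch_ne q hq hq1 n
    have h2 := one_sub_ne q hq hq1 n
    field_simp
    ring

lemma G_eq (q w : ℝ) (hq : 0 < q) (hq1 : q ≠ 1) (G : PowerSeries ℝ) (hG : G = Eser q w * eser q) :
    G - PowerSeries.X * (PowerSeries.C (1 + q) * G) + PowerSeries.X * (PowerSeries.X * (PowerSeries.C q * G))
     - PowerSeries.rescale q G + PowerSeries.X * (PowerSeries.C q * PowerSeries.rescale q G)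
     = PowerSeries.X * (PowerSeries.C (q * w) * PowerSeries.rescale (q ^ 2) G) := by
  have h1 := Eser_eq q w hq hq1
  have h2 := eser_eq q hq hq1
  have h3 : PowerSeries.rescale (q^2) (eser q) =
      (1 - PowerSeries.C q * PowerSeries.X) * PowerSeries.rescale q (eser q) := by
    rw [pow_two, ← PowerSeries.rescale_rescale]
    conv_lhs => rw [h2]
    rw [map_sub, map_mul, PowerSeries.rescale_X]
    ring
  rw [hG, map_mul (PowerSeries.rescale q), map_mul (PowerSeries.rescale (q ^ 2)), h3, h2, map_add, map_one]
  linear_combination (1 - PowerSeries.X) * (1 - PowerSeries.C q * PowerSeries.X) * eser q * h1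

lemma S_rec (q w : ℝ) (hq : 0 < q) (hq1 : q ≠ 1) (n : ℕ) :
    (1 - q ^ (n+2)) * Ssum q w (n+2) =
      (1 + q - q ^ (n+2) + w * q ^ (2*n+3)) * Ssum q w (n+1) - q * Ssum q w n := by
  have h := congrArg (PowerSeries.coeff (n+2)) (G_eq q w hq hq1 _ rfl)
  simp only [map_sub, map_add, PowerSeries.coeff_succ_X_mul, PowerSeries.coeff_C_mul,
    PowerSeries.coeff_rescale, coeff_Ee] at h
  simp only [← map_add, PowerSeries.coeff_C_mul, coeff_Ee] at h
  linear_combination h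

lemma S_zero (q w : ℝ) : Ssum q w 0 = 1 := by simp [Ssum, qPoch_zero]

lemma S_one (q w : ℝ) (hq1 : q ≠ 1) : (1 - q) * Ssum q w 1 = 1 + q * w := by
  have : 1 - q ≠ 0 := sub_ne_zero.2 hq1.symm
  simp [Ssum, Finset.sum_range_succ, qPoch]
  field_simp

noncomputable def Fsum (q Q w : ℝ) (M : ℕ) (y : ℝ) : ℝ :=
  ∑ n ∈ Finset.range (M + 1), qPoch q y n * qPoch q Q n * q ^ n * Ssum q w n

lemma key (q Q r y : ℝ) (hq : 0 < q) (hq1 : q ≠ 1) (M : ℕ) :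
    q ^ M * (y ^ 2 * Fsum q Q (Q * r) M (y / q)
      + q * Q ^ 2 * (y - 1) * (y - r) * Fsum q Q (Q * r) M (q * y)
      - (Q ^ 2 * q * r - Q * q * (1 + r) * y + Q * (q + 1) * y ^ 2) * Fsum q Q (Q * r) M y)
    = (1 - Q * q ^ M) * qPoch q Q M * qPoch q y M * y *
      ((1 - q ^ (M+1)) * Ssum q (Q * r) (M+1)
        - (1 - Q * q ^ (M+1)) * (1 - y * q ^ M) * Ssum q (Q * r) M) := by
  induction M with
  | zero =>
    have h := S_one q (Q * r) hq1
    simp only [Fsum, Finset.sum_range_one, qPoch_zero, S_zero, zero_add, pow_zero, pow_one, Finset.range_one, Finset.sum_singleton]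
    linear_combination (- (1 - Q) * y) * h
  | succ M ih =>
    have hF : ∀ z, Fsum q Q (Q * r) (M+1) z = Fsum q Q (Q * r) M z +
        qPoch q z (M+1) * qPoch q Q (M+1) * q ^ (M+1) * Ssum q (Q * r) (M+1) := by
      intro z; rw [Fsum, Finset.sum_range_succ]; rfl
    have hrec := S_rec q (Q * r) hq hq1 M
    have e1 : qPoch q (y / q) (M+1) = (1 - y / q) * qPoch q y M := by
      rw [qPoch_shift, mul_div_cancel₀ _ hq.ne']
    have e2 : (y - 1) * qPoch q (q * y) (M+1) =
        - (qPoch q y M * (1 - y * q ^ M) * (1 - y * q ^ (M+1))) := by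
      rw [← qPoch_succ, ← qPoch_succ, qPoch_shift q y (M+1)]; ring
    have e3 : y / q * q = y := div_mul_cancel₀ _ hq.ne'
    rw [hF, hF, hF, e1]
    simp only [qPoch_succ q Q M, qPoch_succ q y M]
    set P := qPoch q y M
    set R := qPoch q Q M
    set s0 := Ssum q (Q * r) M
    set s1 := Ssum q (Q * r) (M+1)
    set s2 := Ssum q (Q * r) (M+1+1)
    have hrec' : (1 - q ^ M * q ^ 2) * s2 =
      (1 + q - q ^ M * q ^ 2 + (Q * r) * (q ^ M) ^ 2 * q ^ 3) * s1 - q * s0 := by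
      have : s2 = Ssum q (Q * r) (M+2) := rfl
      rw [this]; linear_combination hrec
    generalize y / q = yq at *
    simp only [pow_succ q M, pow_succ q (M+1)] at *
    generalize q ^ M = z at *
    linear_combination q * ih
      + (q * z) * (q * Q ^ 2 * (y - r)) * (R * (1 - Q * z)) * (z * q) * s1 * e2
      - (1 - Q * z * q) * (R * (1 - Q * z)) * (P * (1 - y * z)) * y * hrec'
      - (q*z) * y^2 * P * R * (1 - Q * z) * z * s1 * e3

lemma final (q Q r y : ℝ) (hq : 0 < q) (hq1 : q ≠ 1) (N : ℕ) (hQ : Q * q ^ N = 1) :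
    y ^ 2 * Fsum q Q (Q * r) N (y / q)
      + q * Q ^ 2 * (y - 1) * (y - r) * Fsum q Q (Q * r) N (q * y)
      - (Q ^ 2 * q * r - Q * q * (1 + r) * y + Q * (q + 1) * y ^ 2) * Fsum q Q (Q * r) N y = 0 := by
  have h := key q Q r y hq hq1 N
  rw [hQ, sub_self, zero_mul, zero_mul, zero_mul, zero_mul] at h
  exact (mul_eq_zero.1 h).resolve_left (pow_pos hq N).ne'

lemma confEq02_symm (q h₁ h₂ α₁ lam t₁ t₂ : ℝ) (g : ℝ → ℝ)
    (h : confEq02 q h₁ h₂ α₁ lam t₁ t₂ g) : confEq02 q h₂ h₁ α₁ lam t₂ t₁ g := by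
  intro x hx
  have := h x hx
  rw [show α₁ + 2 * lam - h₂ - h₁ = α₁ + 2 * lam - h₁ - h₂ by ring]
  linear_combination this

lemma core (q h₁ h₂ α₁ lam t₁ t₂ : ℝ) (N : ℕ)
    (hq : 0 < q) (hq1 : q ≠ 1) (ht₁ : t₁ ≠ 0) (ht₂ : t₂ ≠ 0)
    (hNlam : lam + α₁ = -(N : ℝ)) :
    confEq02 q h₁ h₂ α₁ lam t₁ t₂ (fun x =>
      x ^ (-α₁) * ∑ n ∈ Finset.range (N + 1),
        qPoch q (q ^ (h₁ + 1/2) * t₁ / x) n * qPoch q (q ^ (lam + α₁)) n * q ^ n *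
          ∑ k ∈ Finset.range (n + 1),
            q ^ ((k : ℝ) ^ 2) * (q ^ (lam + α₁ + h₁ - h₂) * t₁ / t₂) ^ k /
              (qPoch q q k * qPoch q q (n - k))) := by
  intro x hx
  have hpow : ∀ k : ℕ, q ^ ((k:ℝ)^2) = q ^ (k^2) := by
    intro k; have h := Real.rpow_natCast q (k^2); push_cast at h; exact h
  obtain ⟨a, ha⟩ : ∃ a, a = q ^ (h₁ + 1/2) * t₁ := ⟨_, rfl⟩
  obtain ⟨b, hb⟩ : ∃ b, b = q ^ (h₂ + 1/2) * t₂ := ⟨_, rfl⟩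
  obtain ⟨Q, hQ⟩ : ∃ Q, Q = q ^ (lam + α₁) := ⟨_, rfl⟩
  have ha0 : a ≠ 0 := by rw [ha]; exact mul_ne_zero (Real.rpow_pos_of_pos hq _).ne' ht₁
  have hb0 : b ≠ 0 := by rw [hb]; exact mul_ne_zero (Real.rpow_pos_of_pos hq _).ne' ht₂
  have hQN : Q * q ^ N = 1 := by
    rw [hQ, hNlam, ← Real.rpow_natCast, ← Real.rpow_add hq]; simp
  have hw : q ^ (lam + α₁ + h₁ - h₂) * t₁ / t₂ = Q * (a / b) := by
    rw [hQ, ha, hb, show lam + α₁ + h₁ - h₂ = (lam + α₁) + (h₁ + 1/2) - (h₂ + 1/2) by ring,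
      Real.rpow_sub hq, Real.rpow_add hq]
    have := (Real.rpow_pos_of_pos hq (h₂ + 1/2)).ne'
    field_simp
  have hf := final q Q (a / b) (a / x) hq hq1 N hQN
  have i1 : q ^ (-h₁ - 1/2) * t₁⁻¹ = a⁻¹ := by
    rw [ha, mul_inv, ← Real.rpow_neg hq.le]; ring_nf
  have i2 : q ^ (-h₂ - 1/2) * t₂⁻¹ = b⁻¹ := by
    rw [hb, mul_inv, ← Real.rpow_neg hq.le]; ring_nf
  have hh : q ^ (1/2 : ℝ) * q ^ (1/2 : ℝ) = q := by
    rw [← Real.rpow_add hq]; norm_num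
  have hh1 : q ^ (-h₁) * t₁⁻¹ = q ^ (1/2:ℝ) * a⁻¹ := by
    rw [← i1, ← mul_assoc, ← Real.rpow_add hq]; ring_nf
  have hh2 : q ^ (-h₂) * t₂⁻¹ = q ^ (1/2:ℝ) * b⁻¹ := by
    rw [← i2, ← mul_assoc, ← Real.rpow_add hq]; ring_nf
  obtain ⟨L, hL⟩ : ∃ L, L = q ^ lam := ⟨_, rfl⟩
  obtain ⟨A, hA⟩ : ∃ A, A = q ^ α₁ := ⟨_, rfl⟩
  have hA0 : A ≠ 0 := by rw [hA]; exact (Real.rpow_pos_of_pos hq _).ne'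
  have hQLA : Q = L * A := by rw [hQ, hL, hA, Real.rpow_add hq]
  have j1 : q ^ (2 * lam + 1) = L ^ 2 * q := by
    rw [Real.rpow_add hq, two_mul, Real.rpow_add hq, Real.rpow_one, hL]; ring
  have j2 : q ^ (α₁ + 2 * lam - h₁ - h₂) * t₁⁻¹ * t₂⁻¹ = A * L ^ 2 * q * a⁻¹ * b⁻¹ := by
    rw [show α₁ + 2 * lam - h₁ - h₂ = α₁ + lam + lam + (-h₁) + (-h₂) by ring,
      Real.rpow_add hq, Real.rpow_add hq, Real.rpow_add hq, Real.rpow_add hq, ← hA, ← hL]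
    linear_combination (A * L * L * q ^ (-h₂) * t₂⁻¹) * hh1 +
      (A * L * L * q ^ (1/2:ℝ) * a⁻¹) * hh2 + A * L * L * a⁻¹ * b⁻¹ * hh
  have j3 : q ^ (lam + 1/2) * (q ^ (-h₁) * t₁⁻¹ + q ^ (-h₂) * t₂⁻¹) =
      L * q * (a⁻¹ + b⁻¹) := by
    rw [hh1, hh2, Real.rpow_add hq, ← hL]
    linear_combination L * (a⁻¹ + b⁻¹) * hh
  have k1 : (q * x) ^ (-α₁) = A⁻¹ * x ^ (-α₁) := by
    rw [Real.mul_rpow hq.le hx.le, Real.rpow_neg hq.le, hA]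
  have k2 : (x / q) ^ (-α₁) = A * x ^ (-α₁) := by
    rw [Real.div_rpow hx.le hq.le, Real.rpow_neg hq.le, hA, div_inv_eq_mul, mul_comm]
  have l1 : a / (q * x) = a / x / q := by rw [div_div, mul_comm]
  have l2 : a / (x / q) = q * (a / x) := by field_simp
  simp only [hpow, hw, ← ha, ← hQ, i1, i2, j1, j2, j3, k1, k2, l1, l2, ← hL]
  change A⁻¹ * x ^ (-α₁) * Fsum q Q (Q * (a/b)) N (a / x / q) +
    L ^ 2 * q * (1 - a⁻¹ * x) * (1 - b⁻¹ * x) * (A * x ^ (-α₁) * Fsum q Q (Q * (a/b)) N (q * (a/x)))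
    - _ * (x ^ (-α₁) * Fsum q Q (Q * (a/b)) N (a/x)) = 0
  generalize Fsum q Q (Q * (a/b)) N (a / x / q) = F1 at *
  generalize Fsum q Q (Q * (a/b)) N (q * (a / x)) = F2 at *
  generalize Fsum q Q (Q * (a/b)) N (a / x) = F3 at *
  generalize x ^ (-α₁) = X at *
  have hx0 := hx.ne'
  have : ∀ T, T = A⁻¹ * X * (x / a) ^ 2 * ((a / x) ^ 2 * F1 + q * Q ^ 2 * (a / x - 1) * (a / x - a / b) * F2 -
      (Q ^ 2 * q * (a / b) - Q * q * (1 + a / b) * (a / x) + Q * (q + 1) * (a / x) ^ 2) * F3) → T = 0 := by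
    intro T hT; rw [hT, hf, mul_zero]
  apply this
  rw [hQLA]
  field_simp

theorem stmt9 (q h₁ h₂ α₁ lam t₁ t₂ hᵢ hᵢ' tᵢ tᵢ' : ℝ) (N : ℕ)
    (hq : 0 < q) (hq1 : q ≠ 1) (ht₁ : t₁ ≠ 0) (ht₂ : t₂ ≠ 0)
    (hidx : (hᵢ, hᵢ', tᵢ, tᵢ') = (h₁, h₂, t₁, t₂) ∨ (hᵢ, hᵢ', tᵢ, tᵢ') = (h₂, h₁, t₂, t₁))
    (hN : 0 < N) (hNlam : lam + α₁ = -(N : ℝ)) :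
    confEq02 q h₁ h₂ α₁ lam t₁ t₂ (fun x =>
      x ^ (-α₁) * ∑ n ∈ Finset.range (N + 1),
        qPoch q (q ^ (hᵢ + 1/2) * tᵢ / x) n * qPoch q (q ^ (lam + α₁)) n * q ^ n *
          ∑ k ∈ Finset.range (n + 1),
            q ^ ((k : ℝ) ^ 2) * (q ^ (lam + α₁ + hᵢ - hᵢ') * tᵢ / tᵢ') ^ k /
              (qPoch q q k * qPoch q q (n - k))) := by
  rcases hidx with h | h
  · simp only [Prod.mk.injEq] at h
    obtain ⟨rfl, rfl, rfl, rfl⟩ := h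
    exact core q _ _ α₁ lam _ _ N hq hq1 ht₁ ht₂ hNlam
  · simp only [Prod.mk.injEq] at h
    obtain ⟨rfl, rfl, rfl, rfl⟩ := h
    exact confEq02_symm _ _ _ _ _ _ _ _ (core q _ _ α₁ lam _ _ N hq hq1 ht₂ ht₁ hNlam)
end

section
/- Let q be a real number with 0 < q < 1, let h₁, h₂, α₁, λ be real numbers and t₁, t₂ nonzero reals. Suppose y : ℝ_{>0} → ℝ satisfies the variant of the confluent q-hypergeometric equation of type (0,2) with parameters (h₁, h₂, α₁, λ, t₁, t₂) for all x > 0. Set α̃₁ = 1 - 2λ - α₁ and define u(x) := (q^{-h₁+1/2}·t₁⁻¹·x ; q)_∞ · (q^{-h₂+1/2}·t₂⁻¹·x ; q)_∞ · y(x), where (z;q)_∞ := ∏_{i=0}^{∞}(1 - z·q^i). Then u satisfies, for all x > 0: q^{2λ+1}·u(x/q) + (1 - q^{-h₁+1/2}t₁⁻¹x)(1 - q^{-h₂+1/2}t₂⁻¹x)·u(qx) - [q^{-α̃₁-h₁-h₂+1}·t₁⁻¹t₂⁻¹·x² - q^{λ+1/2}(q^{-h₂}t₂⁻¹ + q^{-h₁}t₁⁻¹)x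 + q^{λ}(q+1)]·u(x) = 0, which is the variant of the confluent q-hypergeometric equation of type (2,0) with parameters l₁ = h₁, l₂ = h₂, α̃₁ and λ (multiplied through by q^{2λ+1}). -/
/-- The infinite q-Pochhammer symbol `(z;q)_∞ = ∏_{i=0}^{∞} (1 - z q^i)`. -/
noncomputable def qPochInf (q z : ℝ) : ℝ :=
  ∏' i : ℕ, (1 - z * q ^ i)

theorem qPochInf_step (q z : ℝ) (hq0 : 0 < q) (hq1 : q < 1) :
    qPochInf q z = (1 - z) * qPochInf q (q * z) := by
  have hs : Summable (fun i : ℕ => ‖-(q * z) * q ^ i‖) :=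
    ((summable_geometric_of_lt_one hq0.le hq1).mul_left (-(q * z))).norm
  have hm : Multipliable (fun i : ℕ => 1 - z * q ^ (i + 1)) := by
    have h := multipliable_one_add_of_summable hs
    refine h.congr fun i => ?_
    ring
  unfold qPochInf
  rw [tprod_eq_zero_mul' (f := fun i : ℕ => 1 - z * q ^ i) hm]
  congr 1
  · simp
  · exact tprod_congr fun i => by ring

theorem stmt19 (q h₁ h₂ α₁ lam t₁ t₂ : ℝ)
    (hq0 : 0 < q) (hq1 : q < 1) (ht₁ : t₁ ≠ 0) (ht₂ : t₂ ≠ 0)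
    (y u : ℝ → ℝ)
    (hy : confEq02 q h₁ h₂ α₁ lam t₁ t₂ y)
    (hu : ∀ x : ℝ,
      u x = qPochInf q (q ^ (-h₁ + 1/2) * t₁⁻¹ * x) * qPochInf q (q ^ (-h₂ + 1/2) * t₂⁻¹ * x)
              * y x)
    (α₁' : ℝ) (hα₁' : α₁' = 1 - 2 * lam - α₁) :
    ∀ x : ℝ, 0 < x →
      q ^ (2 * lam + 1) * u (x / q)
      + (1 - q ^ (-h₁ + 1/2) * t₁⁻¹ * x) * (1 - q ^ (-h₂ + 1/2) * t₂⁻¹ * x) * u (q * x)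
      - (q ^ (-α₁' - h₁ - h₂ + 1) * t₁⁻¹ * t₂⁻¹ * x ^ 2
          - q ^ (lam + 1/2) * (q ^ (-h₂) * t₂⁻¹ + q ^ (-h₁) * t₁⁻¹) * x
          + q ^ lam * (q + 1)) * u x = 0 := by
  intro x hx
  have e := hy x hx
  have hexp : -α₁' - h₁ - h₂ + 1 = α₁ + 2 * lam - h₁ - h₂ := by rw [hα₁']; ring
  have key : ∀ h t : ℝ,
      qPochInf q (q ^ (-h + 1/2) * t⁻¹ * (x / q))
        = (1 - q ^ (-h - 1/2) * t⁻¹ * x) * qPochInf q (q ^ (-h + 1/2) * t⁻¹ * x) := by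
    intro h t
    have hp : q ^ (-h + 1/2) = q ^ (-h - 1/2) * q := by
      rw [← Real.rpow_add_one hq0.ne']; congr 1; ring
    rw [qPochInf_step q _ hq0 hq1, hp]
    congr 2 <;> field_simp
  have key2 : ∀ h t : ℝ,
      qPochInf q (q ^ (-h + 1/2) * t⁻¹ * x)
        = (1 - q ^ (-h + 1/2) * t⁻¹ * x) * qPochInf q (q ^ (-h + 1/2) * t⁻¹ * (q * x)) := by
    intro h t
    rw [qPochInf_step q _ hq0 hq1]
    congr 2; ring
  have k1 := key2 h₁ t₁
  have k2 := key2 h₂ t₂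
  rw [hu (x / q), hu (q * x), hu x, hexp, key h₁ t₁, key h₂ t₂]
  generalize qPochInf q (q ^ (-h₁ + 1/2) * t₁⁻¹ * x) = A at *
  generalize qPochInf q (q ^ (-h₂ + 1/2) * t₂⁻¹ * x) = B at *
  generalize qPochInf q (q ^ (-h₁ + 1/2) * t₁⁻¹ * (q * x)) = A' at *
  generalize qPochInf q (q ^ (-h₂ + 1/2) * t₂⁻¹ * (q * x)) = B' at *
  have k : A * B = (1 - q ^ (-h₁ + 1/2) * t₁⁻¹ * x) * (1 - q ^ (-h₂ + 1/2) * t₂⁻¹ * x)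
      * (A' * B') := by rw [k1, k2]; ring
  linear_combination (A * B) * e - y (q * x) * k
end
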